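/- Let B = {b_i}_{i≥1} be a set of pairwise coprime positive integers greater than 1 with ∑_i 1/b_i < ∞. Then the set A of B-free numbers (positive integers not divisible by any element of B) has natural density ∏_{i≥1} (1 - 1/b_i), and this density is positive. -/

import Mathlib

/-!
Removing the multiples of `b₀` from the numbers free of `b₁, …, bₖ` removes exactly the `b₀`-dilate
of that set, by coprimality. A dilate by `b₀` has its density divided by `b₀`, so each such step
multiplies the density by `1 - 1 / b₀`, which settles finite families. For an infinite family, the
numbers up to `x` divisible by some `b i` with `i` outside a finite set `s` number at most
`x * ∑_{i ∉ s} 1 / b i`. This bound, divided by `x`, tends to `0` uniformly in `x` as `s` grows,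
so the limits in `s` and `x` may be interchanged.
-/

open Filter Finset Topology

lemma tprod_one_sub_pos {ι : Type*} {f : ι → ℝ} (hf : Summable f) (hlt : ∀ i, f i < 1) :
    0 < ∏' i, (1 - f i) := by
  have hlog : Summable fun i ↦ Real.log (1 - f i) := by
    simpa only [sub_eq_add_neg] using Real.summable_log_one_add_of_summable hf.neg
  rw [← Real.rexp_tsum_eq_tprod (fun i ↦ sub_pos.2 (hlt i)) hlog]
  exact Real.exp_pos _

open Classical in
/-- The number of `n ∈ S` with `1 ≤ n ≤ x`; whether `0 ∈ S` is irrelevant. -/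
noncomputable def countUpTo (S : Set ℕ) (x : ℕ) : ℕ := #{n ∈ Icc 1 x | n ∈ S}

/-- `S` has natural (asymptotic) density `d`: the proportion of `1, …, x` lying in `S` tends
to `d`. -/
def HasNaturalDensity (S : Set ℕ) (d : ℝ) : Prop :=
  Tendsto (fun x : ℕ ↦ (countUpTo S x : ℝ) / x) atTop (𝓝 d)

section Counting

variable {S T : Set ℕ}

lemma countUpTo_univ (x : ℕ) : countUpTo Set.univ x = x := by
  simp [countUpTo]

lemma countUpTo_mono (h : S ⊆ T) (x : ℕ) : countUpTo S x ≤ countUpTo T x := by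
  classical
  exact card_le_card (monotone_filter_right _ fun _ _ hn ↦ h hn)

lemma countUpTo_sdiff (h : T ⊆ S) (x : ℕ) :
    (countUpTo (S \ T) x : ℝ) = countUpTo S x - countUpTo T x := by
  classical
  unfold countUpTo
  rw [← cast_card_sdiff (monotone_filter_right _ fun _ _ hn ↦ h hn)]
  congr 2 with n
  grind

lemma countUpTo_image_mul_left {a : ℕ} (ha : a ≠ 0) (S : Set ℕ) (x : ℕ) :
    countUpTo ((a * ·) '' S) x = countUpTo S (x / a) := by
  classical
  have ha' : 0 < a := Nat.pos_of_ne_zero ha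
  rw [countUpTo, countUpTo,
    ← card_image_of_injective {n ∈ Icc 1 (x / a) | n ∈ S} (mul_right_injective₀ ha)]
  congr 1 with n
  simp only [mem_filter, mem_Icc, Set.mem_image, mem_image, Nat.le_div_iff_mul_le ha',
    mul_comm _ a]
  constructor
  · rintro ⟨⟨hpos, hle⟩, m, hm, rfl⟩
    exact ⟨m, ⟨⟨Nat.pos_of_mul_pos_left hpos, hle⟩, hm⟩, rfl⟩
  · rintro ⟨m, ⟨⟨hpos, hle⟩, hm⟩, rfl⟩
    exact ⟨⟨Nat.mul_pos ha' hpos, hle⟩, m, hm, rfl⟩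

lemma countUpTo_setOf_exists_dvd_le {ι : Type*} {b : ι → ℕ}
    (hsum : Summable fun i ↦ 1 / (b i : ℝ)) (x : ℕ) :
    (countUpTo {n | ∃ i, b i ∣ n} x : ℝ) ≤ x * ∑' i, 1 / (b i : ℝ) := by
  classical
  choose divisorIndex hdvd using fun n : {n // ∃ i, b i ∣ n} ↦ n.2
  set t : Finset ι := ((Icc 1 x).subtype _).image divisorIndex
  have hcover : {n ∈ Icc 1 x | ∃ i, b i ∣ n} ⊆ t.biUnion fun i ↦ {n ∈ Icc 1 x | b i ∣ n} := by
    intro n hn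
    obtain ⟨hnx, hn⟩ := mem_filter.1 hn
    exact mem_biUnion.2 ⟨divisorIndex ⟨n, hn⟩, mem_image_of_mem _ (mem_subtype.2 hnx),
      mem_filter.2 ⟨hnx, hdvd ⟨n, hn⟩⟩⟩
  have hcount : countUpTo {n | ∃ i, b i ∣ n} x ≤ ∑ i ∈ t, x / b i :=
    calc countUpTo {n | ∃ i, b i ∣ n} x
        ≤ #(t.biUnion fun i ↦ {n ∈ Icc 1 x | b i ∣ n}) := card_le_card hcover
      _ ≤ ∑ i ∈ t, #{n ∈ Icc 1 x | b i ∣ n} := card_biUnion_le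
      _ = ∑ i ∈ t, x / b i := sum_congr rfl fun i _ ↦ Nat.Ioc_filter_dvd_card_eq_div x (b i)
  calc (countUpTo {n | ∃ i, b i ∣ n} x : ℝ)
      ≤ ∑ i ∈ t, ((x / b i : ℕ) : ℝ) := mod_cast hcount
    _ ≤ ∑ i ∈ t, x * (1 / (b i : ℝ)) :=
        sum_le_sum fun i _ ↦ Nat.cast_div_le.trans_eq (mul_one_div _ _).symm
    _ = x * ∑ i ∈ t, 1 / (b i : ℝ) := (mul_sum ..).symm
    _ ≤ x * ∑' i, 1 / (b i : ℝ) := by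
        gcongr
        exact hsum.sum_le_tsum t fun i _ ↦ by positivity

end Counting

namespace HasNaturalDensity

variable {S T : Set ℕ} {d e : ℝ}

lemma univ : HasNaturalDensity Set.univ 1 := by
  refine tendsto_const_nhds.congr' ?_
  filter_upwards [eventually_ne_atTop 0] with x hx
  rw [countUpTo_univ, div_self (Nat.cast_ne_zero.2 hx)]

lemma sdiff (hS : HasNaturalDensity S d) (hT : HasNaturalDensity T e) (h : T ⊆ S) :
    HasNaturalDensity (S \ T) (d - e) := by
  refine (Tendsto.sub hS hT).congr fun x ↦ ?_
  rw [countUpTo_sdiff h, sub_div]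

lemma image_mul_left (hS : HasNaturalDensity S d) {a : ℕ} (ha : a ≠ 0) :
    HasNaturalDensity ((a * ·) '' S) (d / a) := by
  have hquot : Tendsto (fun x : ℕ ↦ ((x / a : ℕ) : ℝ) / x) atTop (𝓝 (1 / a)) := by
    refine ((tendsto_nat_floor_mul_div_atTop (R := ℝ) (by positivity)).comp
      tendsto_natCast_atTop_atTop).congr fun x ↦ ?_
    rw [Function.comp_apply, one_div_mul_eq_div, Nat.floor_div_eq_div]
  have hprod := (Tendsto.comp hS (Nat.tendsto_div_const_atTop ha)).mul hquot
  rw [mul_one_div] at hprod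
  refine hprod.congr' ?_
  filter_upwards [eventually_ge_atTop a] with x hx
  have hx0 : ((x / a : ℕ) : ℝ) ≠ 0 :=
    Nat.cast_ne_zero.2 (Nat.div_pos hx (Nat.pos_of_ne_zero ha)).ne'
  rw [countUpTo_image_mul_left ha, Function.comp_apply, div_mul_div_cancel₀ hx0]

lemma of_forall_subset_of_tendsto {κ : Type*} {l : Filter κ} [l.NeBot] {U : κ → Set ℕ}
    {δ ε : κ → ℝ} (hU : ∀ k, HasNaturalDensity (U k) (δ k)) (hSU : ∀ k, S ⊆ U k)
    (hsdiff : ∀ k x, (countUpTo (U k \ S) x : ℝ) ≤ x * ε k)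
    (hε : Tendsto ε l (𝓝 0)) (hδ : Tendsto δ l (𝓝 d)) : HasNaturalDensity S d := by
  have hunif : TendstoUniformly (fun k (x : ℕ) ↦ (countUpTo (U k) x : ℝ) / x)
      (fun x ↦ (countUpTo S x : ℝ) / x) l := by
    rw [Metric.tendstoUniformly_iff]
    intro η hη
    filter_upwards [hε.eventually_lt_const hη] with k hk x
    rw [dist_comm, Real.dist_eq, ← sub_div, ← countUpTo_sdiff (hSU k),
      abs_of_nonneg (by positivity)]
    have hle : (countUpTo (U k \ S) x : ℝ) / x ≤ max (ε k) 0 := by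
      refine div_le_of_le_mul₀ (by positivity) (le_max_right _ _) ((hsdiff k x).trans ?_)
      rw [mul_comm]
      gcongr
      exact le_max_left _ _
    exact hle.trans_lt (max_lt hk hη)
  exact hunif.tendsto_of_eventually_tendsto (.of_forall hU) hδ

end HasNaturalDensity

section FreeNumbers

variable {ι : Type*} {b : ι → ℕ}

/-- The natural numbers divisible by no `b i` with `i ∈ s`. The index set varies so that the
`B`-free numbers, `s = univ`, can be approximated through finite `s`. -/
def freeNumbers (b : ι → ℕ) (s : Set ι) : Set ℕ := {n | ∀ i ∈ s, ¬ b i ∣ n}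

lemma image_mul_left_freeNumbers_subset {a : ℕ} {s : Set ι} (hcop : ∀ i ∈ s, (b i).Coprime a) :
    (a * ·) '' freeNumbers b s ⊆ freeNumbers b s := by
  rintro _ ⟨m, hm, rfl⟩ i hi hdvd
  exact hm i hi ((hcop i hi).dvd_of_dvd_mul_left hdvd)

lemma freeNumbers_insert (b : ι → ℕ) (i : ι) (s : Set ι) :
    freeNumbers b (insert i s) = freeNumbers b s \ (b i * ·) '' freeNumbers b s := by
  ext n
  simp only [freeNumbers, Set.forall_mem_insert, Set.mem_sdiff, Set.mem_ofPred_eq, Set.mem_image]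
  constructor
  · rintro ⟨hi, hs⟩
    exact ⟨hs, fun ⟨m, _, hmn⟩ ↦ hi ⟨m, hmn.symm⟩⟩
  · rintro ⟨hs, hi⟩
    refine ⟨?_, hs⟩
    rintro ⟨m, rfl⟩
    exact hi ⟨m, fun j hj hdvd ↦ hs j hj (hdvd.mul_left _), rfl⟩

lemma hasNaturalDensity_freeNumbers_finset {s : Finset ι} (hb : ∀ i ∈ s, b i ≠ 0)
    (hcop : (s : Set ι).Pairwise (Function.onFun Nat.Coprime b)) :
    HasNaturalDensity (freeNumbers b s) (∏ i ∈ s, (1 - 1 / (b i : ℝ))) := by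
  classical
  induction s using Finset.induction_on with
  | empty => simpa [freeNumbers] using HasNaturalDensity.univ
  | insert i s hi ih =>
    rw [coe_insert] at hcop
    have hs := ih (fun j hj ↦ hb j (mem_insert_of_mem hj)) (hcop.mono (Set.subset_insert _ _))
    have hcop_i : ∀ j ∈ (s : Set ι), (b j).Coprime (b i) := fun j hj ↦
      hcop (Set.mem_insert_of_mem _ hj) (Set.mem_insert _ _) (ne_of_mem_of_not_mem hj hi)
    have hsdiff := hs.sdiff (hs.image_mul_left (hb i (mem_insert_self i s)))
      (image_mul_left_freeNumbers_subset hcop_i)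
    rw [coe_insert, freeNumbers_insert, prod_insert hi]
    convert hsdiff using 1
    ring

lemma countUpTo_freeNumbers_sdiff_le (hsum : Summable fun i ↦ 1 / (b i : ℝ)) (s : Finset ι)
    (x : ℕ) :
    (countUpTo (freeNumbers b s \ freeNumbers b Set.univ) x : ℝ) ≤
      x * ∑' i : {i // i ∉ s}, 1 / (b i : ℝ) := by
  have hsub : freeNumbers b s \ freeNumbers b Set.univ ⊆ {n | ∃ i : {i // i ∉ s}, b i ∣ n} := by
    rintro n ⟨hs, hfree⟩
    simp only [freeNumbers, Set.mem_ofPred_eq, Set.mem_univ, true_imp_iff, not_forall,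
      not_not] at hfree
    obtain ⟨i, hi⟩ := hfree
    exact ⟨⟨i, fun his ↦ hs i his hi⟩, hi⟩
  exact (Nat.cast_le.2 (countUpTo_mono hsub x)).trans
    (countUpTo_setOf_exists_dvd_le (hsum.subtype {i | i ∉ s}) x)

lemma hasNaturalDensity_freeNumbers_univ (hb : ∀ i, b i ≠ 0)
    (hcop : Pairwise (Function.onFun Nat.Coprime b)) (hsum : Summable fun i ↦ 1 / (b i : ℝ)) :
    HasNaturalDensity (freeNumbers b Set.univ) (∏' i, (1 - 1 / (b i : ℝ))) := by
  have hprod : Multipliable fun i ↦ 1 - 1 / (b i : ℝ) := by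
    simpa only [sub_eq_add_neg] using Real.multipliable_one_add_of_summable hsum.neg
  have hlim : Tendsto (fun s ↦ ∏ i ∈ s, (1 - 1 / (b i : ℝ))) atTop
      (𝓝 (∏' i, (1 - 1 / (b i : ℝ)))) := hprod.hasProd
  exact .of_forall_subset_of_tendsto
    (fun s : Finset ι ↦
      hasNaturalDensity_freeNumbers_finset (fun i _ ↦ hb i) (hcop.set_pairwise s))
    (fun _ _ hn i _ ↦ hn i (Set.mem_univ i)) (countUpTo_freeNumbers_sdiff_le hsum)
    (tendsto_tsum_compl_atTop_zero fun i ↦ 1 / (b i : ℝ)) hlim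

end FreeNumbers

theorem erdos_Bfree_density_general {ι : Type*} (b : ι → ℕ) (hb : ∀ i, 2 ≤ b i)
    (hcop : Pairwise (Function.onFun Nat.Coprime b))
    (hsum : Summable fun i ↦ 1 / (b i : ℝ)) :
    HasNaturalDensity {n | ∀ i, ¬ b i ∣ n} (∏' i, (1 - 1 / (b i : ℝ))) ∧
      0 < ∏' i, (1 - 1 / (b i : ℝ)) := by
  have hinv : ∀ i, 1 / (b i : ℝ) < 1 := fun i ↦ by
    rw [one_div]
    exact inv_lt_one_of_one_lt₀ (mod_cast hb i)
  refine ⟨?_, tprod_one_sub_pos hsum hinv⟩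
  simpa only [freeNumbers, Set.mem_univ, true_imp_iff] using
    hasNaturalDensity_freeNumbers_univ (fun i ↦ (two_pos.trans_le (hb i)).ne') hcop hsum

open Classical in
theorem erdos_Bfree_density (b : ℕ → ℕ) (hb : ∀ i, 2 ≤ b i)
    (hcop : ∀ i j, i ≠ j → Nat.Coprime (b i) (b j))
    (hsum : Summable (fun i => 1 / (b i : ℝ))) :
    Filter.Tendsto (fun x : ℕ =>
        (((Finset.Icc 1 x).filter (fun n => ∀ i, ¬ b i ∣ n)).card : ℝ) / (x : ℝ))
      Filter.atTop (nhds (∏' i, (1 - 1 / (b i : ℝ)))) ∧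
    0 < ∏' i, (1 - 1 / (b i : ℝ)) :=
  erdos_Bfree_density_general b hb (fun i j ↦ hcop i j) hsum
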